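/- For β ∈ (0,1) and u > 0, the Mittag-Leffler function satisfies the integral identity β E_β(−u) = ∫₀^∞ e^{−uy} y^{−1−1/β} w_β(y^{−1/β}) dy, where w_β is the density of a standard totally positively skewed β-stable random variable. -/

import Mathlib

/-- The (real) Mittag-Leffler function `E_β`. -/
noncomputable def mittagLeffler (β x : ℝ) : ℝ :=
  ∑' j : ℕ, x ^ j / Real.Gamma (j * β + 1)

/-- The density of the standard totally positively skewed `β`-stable law `W_β(1,1)`. -/
noncomputable def stableDensity (β x : ℝ) : ℝ :=
  (1 / Real.pi) *
    (∫ u in Set.Ioi (0:ℝ),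
      Complex.exp (-(Complex.I * u * x) -
        (u : ℂ) ^ (β : ℂ) * Complex.exp (-(Complex.I * Real.pi * β) / 2))).re

open MeasureTheory Set Filter Topology

namespace MLS

lemma laplace_integrable {a r : ℝ} (ha : 0 < a) (hr : 0 < r) :
    IntegrableOn (fun t : ℝ => t ^ (a - 1) * Real.exp (-r * t)) (Ioi 0) := by
  have := integrableOn_rpow_mul_exp_neg_mul_rpow (p := 1) (s := a - 1) (b := r) (by linarith)
    one_pos hr
  simpa using this

lemma cont_rpow_exp {a : ℝ} (s : ℂ) :
    ContinuousOn (fun t : ℝ => ((t ^ a : ℝ) : ℂ) * Complex.exp (-s * t)) (Ioi 0) := by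
  apply ContinuousOn.mul
  · apply Complex.continuous_ofReal.comp_continuousOn
    intro t ht
    exact (Real.continuousAt_rpow_const t a (Or.inl (ne_of_gt ht))).continuousWithinAt
  · exact Continuous.continuousOn (by fun_prop)

lemma norm_rpow_exp {a t : ℝ} (ht : 0 < t) (s : ℂ) :
    ‖((t ^ a : ℝ) : ℂ) * Complex.exp (-s * t)‖ = t ^ a * Real.exp (-s.re * t) := by
  rw [norm_mul, Complex.norm_real, Complex.norm_exp, Real.norm_of_nonneg (by positivity)]
  simp

lemma laplace_integrableC {a : ℝ} {s : ℂ} (ha : 0 < a) (hs : 0 < s.re) :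
    IntegrableOn (fun t : ℝ => ((t ^ (a - 1) : ℝ) : ℂ) * Complex.exp (-s * t)) (Ioi 0) := by
  refine Integrable.mono' (laplace_integrable ha hs)
    ((cont_rpow_exp s).aestronglyMeasurable measurableSet_Ioi) ?_
  refine (ae_restrict_iff' measurableSet_Ioi).2 (ae_of_all _ fun t ht => ?_)
  rw [norm_rpow_exp ht]

lemma laplace_diff {a : ℝ} (ha : 0 < a) {s : ℂ} (hs : 0 < s.re) :
    DifferentiableAt ℂ (fun s : ℂ => ∫ t in Ioi (0:ℝ),
      ((t ^ (a - 1) : ℝ) : ℂ) * Complex.exp (-s * t)) s := by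
  have hball : Metric.ball s (s.re / 2) ∈ 𝓝 s := Metric.ball_mem_nhds _ (by positivity)
  have hre : ∀ z ∈ Metric.ball s (s.re / 2), s.re / 2 ≤ z.re := by
    intro z hz
    rw [mem_ball_iff_norm] at hz
    have := (Complex.abs_re_le_norm (z - s)).trans hz.le
    rw [abs_le] at this
    simp at this
    linarith [this.1]
  refine (hasDerivAt_integral_of_dominated_loc_of_deriv_le
    (μ := volume.restrict (Ioi 0))
    (F := fun z t => ((t ^ (a - 1) : ℝ) : ℂ) * Complex.exp (-z * t))
    (F' := fun z t => -(((t ^ a : ℝ) : ℂ) * Complex.exp (-z * t)))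
    (bound := fun t => t ^ a * Real.exp (-(s.re / 2) * t)) hball ?_
    (laplace_integrableC ha hs) ?_ ?_ ?_ ?_).2.differentiableAt
  · exact Eventually.of_forall fun z =>
      (cont_rpow_exp z).aestronglyMeasurable measurableSet_Ioi
  · exact (cont_rpow_exp s).neg.aestronglyMeasurable measurableSet_Ioi
  · refine (ae_restrict_iff' measurableSet_Ioi).2 (ae_of_all _ fun t ht z hz => ?_)
    have ht' : 0 < t := ht
    rw [norm_neg, norm_rpow_exp ht]
    have := hre z hz
    gcongr
  · have := laplace_integrable (a := a + 1) (r := s.re / 2) (by linarith) (by positivity)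
    simpa [IntegrableOn] using this
  · refine (ae_restrict_iff' measurableSet_Ioi).2 (ae_of_all _ fun t ht z hz => ?_)
    have ht' : 0 < t := ht
    have h1 : HasDerivAt (fun z : ℂ => Complex.exp (-z * t))
        (Complex.exp (-z * t) * (-1 * t)) z :=
      (((hasDerivAt_id z).neg).mul_const (t : ℂ)).cexp
    refine (h1.const_mul ((t ^ (a - 1) : ℝ) : ℂ)).congr_deriv ?_
    rw [show t ^ a = t ^ (a - 1) * t by
      rw [← Real.rpow_add_one ht'.ne']; simp]
    push_cast; ring

lemma laplace_eq {a : ℝ} (ha : 0 < a) {s : ℂ} (hs : 0 < s.re) :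
    ∫ t in Ioi (0:ℝ), ((t ^ (a - 1) : ℝ) : ℂ) * Complex.exp (-s * t)
      = Real.Gamma a * s ^ (-(a:ℂ)) := by
  have hopen : IsOpen {z : ℂ | 0 < z.re} := isOpen_lt continuous_const Complex.continuous_re
  have hpre : IsPreconnected {z : ℂ | 0 < z.re} := (convex_halfSpace_re_gt 0).isPreconnected
  have hA : AnalyticOnNhd ℂ (fun s : ℂ => ∫ t in Ioi (0:ℝ),
      ((t ^ (a - 1) : ℝ) : ℂ) * Complex.exp (-s * t)) {z : ℂ | 0 < z.re} :=
    DifferentiableOn.analyticOnNhd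
      (fun z hz => (laplace_diff ha hz).differentiableWithinAt) hopen
  have hB : AnalyticOnNhd ℂ (fun s : ℂ => Real.Gamma a * s ^ (-(a:ℂ))) {z : ℂ | 0 < z.re} := by
    refine DifferentiableOn.analyticOnNhd (fun z hz => ?_) hopen
    have : z ∈ Complex.slitPlane := Or.inl hz
    exact ((differentiableAt_id.cpow_const this).const_mul _).differentiableWithinAt
  have hreal : ∀ r : ℝ, 0 < r → ∫ t in Ioi (0:ℝ), ((t ^ (a - 1) : ℝ) : ℂ) *
      Complex.exp (-(r:ℂ) * t) = Real.Gamma a * (r:ℂ) ^ (-(a:ℂ)) := by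
    intro r hr
    have := Real.integral_rpow_mul_exp_neg_mul_Ioi ha hr
    have h2 : ∫ t in Ioi (0:ℝ), ((t ^ (a - 1) : ℝ) : ℂ) * Complex.exp (-(r:ℂ) * t)
      = ∫ t in Ioi (0:ℝ), ((t ^ (a - 1) * Real.exp (-(r * t)) : ℝ) : ℂ) := by
      congr 1; ext t; push_cast; congr 2; ring
    rw [h2, integral_complex_ofReal, this, one_div, Real.inv_rpow hr.le, ← Real.rpow_neg hr.le,
      Complex.ofReal_mul, Complex.ofReal_cpow hr.le, mul_comm]
    push_cast; rfl
  refine AnalyticOnNhd.eqOn_of_preconnected_of_frequently_eq hA hB hpre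
    (z₀ := 1) (by simp) ?_ hs
  have ht : Tendsto (fun n : ℕ => ((1 + 1 / ((n:ℝ) + 1) : ℝ) : ℂ)) atTop (𝓝[≠] 1) := by
    refine tendsto_nhdsWithin_iff.2 ⟨?_, Eventually.of_forall fun n => ?_⟩
    · have := (tendsto_one_div_add_atTop_nhds_zero_nat (𝕜 := ℝ)).const_add 1
      simpa [Function.comp_def] using (Complex.continuous_ofReal.tendsto _).comp this
    · have : (1:ℝ) / ((n:ℝ) + 1) ≠ 0 := by positivity
      intro h
      simp only [mem_singleton_iff] at h
      norm_cast at h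
      simp at h
      norm_cast at h
  refine ht.frequently (Frequently.of_forall fun n => ?_)
  exact hreal _ (by positivity)

/-- point on the vertical line -/
noncomputable def S (c v : ℝ) : ℂ := (c : ℂ) + v * Complex.I

@[simp] lemma S_re (c v : ℝ) : (S c v).re = c := by simp [S]
@[simp] lemma S_im (c v : ℝ) : (S c v).im = v := by simp [S]

lemma S_cont (c : ℝ) : Continuous (S c) := by unfold S; fun_prop

lemma S_ne {c : ℝ} (hc : 0 < c) (v : ℝ) : S c v ≠ 0 := by
  intro h
  have := congrArg Complex.re h
  simp at this; linarith

lemma S_slit {c : ℝ} (hc : 0 < c) (v : ℝ) : S c v ∈ Complex.slitPlane := Or.inl (by simpa)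

lemma S_norm_ge {c : ℝ} (hc : 0 ≤ c) (v : ℝ) : c ≤ ‖S c v‖ := by
  have := Complex.abs_re_le_norm (S c v)
  rwa [S_re, abs_of_nonneg hc] at this

lemma S_norm_ge' (c v : ℝ) : |v| ≤ ‖S c v‖ := by
  simpa using Complex.abs_im_le_norm (S c v)

lemma S_norm_sq (c v : ℝ) : ‖S c v‖ ^ 2 = c ^ 2 + v ^ 2 := by
  rw [← Complex.normSq_eq_norm_sq, Complex.normSq_apply]; simp; ring

lemma S_cpow_cont {c : ℝ} (hc : 0 < c) (p : ℂ) : Continuous (fun v => (S c v) ^ p) :=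
  continuous_iff_continuousAt.2 fun v =>
    ContinuousAt.cpow (S_cont c).continuousAt continuousAt_const (S_slit hc v)

lemma norm_sq_integrable {c : ℝ} (hc : 0 < c) : Integrable (fun v => ‖S c v‖ ^ (-2:ℝ)) := by
  have h := (integrable_inv_one_add_sq.comp_mul_left' (R := c⁻¹) (by positivity)).const_mul (c⁻¹^2)
  convert h using 2 with v
  rw [Real.rpow_neg (norm_nonneg _), Real.rpow_two, S_norm_sq]
  field_simp

lemma norm_rpow_integrable {c a : ℝ} (hc : 0 < c) (ha : 2 ≤ a) :
    Integrable (fun v => (S c v) ^ (-(a:ℂ))) := by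
  refine Integrable.mono' ((norm_sq_integrable hc).const_mul (c ^ (-(a-2))))
    (S_cpow_cont hc _).aestronglyMeasurable (ae_of_all _ fun v => ?_)
  have hp : 0 < ‖S c v‖ := norm_pos_iff.2 (S_ne hc v)
  rw [← Complex.ofReal_neg, Complex.norm_cpow_real]
  rw [show -a = -(a-2) + -2 by ring, Real.rpow_add hp]
  gcongr ?_ * _
  exact Real.rpow_le_rpow_of_nonpos hc (S_norm_ge hc.le v) (by linarith)

lemma gamma_inv {a c : ℝ} (ha : 2 ≤ a) (hc : 0 < c) :
    ∫ v : ℝ, Complex.exp (S c v) * (S c v) ^ (-(a:ℂ)) = 2 * Real.pi / Real.Gamma a := by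
  have hG : Real.Gamma a ≠ 0 := (Real.Gamma_pos_of_pos (by linarith)).ne'
  set f : ℝ → ℂ := fun t => (((max t 0) ^ (a - 1) : ℝ) : ℂ) * Complex.exp (-(c:ℂ) * t) with hf
  have hz : ∀ t : ℝ, t ∉ Ioi 0 → f t = 0 := by
    intro t ht
    have : max t 0 = 0 := max_eq_right (not_lt.1 ht)
    simp only [hf, this]
    rw [Real.zero_rpow (by linarith)]; simp
  have hcont : Continuous f := by
    refine Continuous.mul (Complex.continuous_ofReal.comp ?_) (by fun_prop)
    exact (continuous_id.max continuous_const).rpow_const (fun _ => Or.inr (by linarith))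
  have hfe : ∀ t ∈ Ioi (0:ℝ), f t = ((t ^ (a - 1) : ℝ) : ℂ) * Complex.exp (-(c:ℂ) * t) := by
    intro t ht
    simp only [hf, max_eq_left (le_of_lt (show (0:ℝ) < t from ht))]
  have hInteg : Integrable f := by
    refine IntegrableOn.integrable_of_ae_notMem_eq_zero (s := Ioi 0) ?_ (ae_of_all _ hz)
    refine (laplace_integrableC (a := a) (s := c) (by linarith) (by simpa)).congr_fun ?_
      measurableSet_Ioi
    intro t ht; exact (hfe t ht).symm
  have hF : ∀ w, FourierTransform.fourier f w
      = Real.Gamma a * (S c (2 * Real.pi * w)) ^ (-(a:ℂ)) := by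
    intro w
    rw [Real.fourier_real_eq_integral_exp_smul,
      ← setIntegral_eq_integral_of_forall_compl_eq_zero (s := Ioi 0),
      ← laplace_eq (by linarith) (by simpa)]
    · refine setIntegral_congr_fun measurableSet_Ioi fun t ht => ?_
      rw [hfe t ht, smul_eq_mul, mul_left_comm, ← Complex.exp_add]
      congr 2
      simp only [S]; push_cast; ring
    · intro t ht; rw [hz t ht, smul_zero]
  have hFi : Integrable (FourierTransform.fourier f) := by
    rw [funext hF]
    exact ((norm_rpow_integrable hc ha).comp_mul_left' (R := 2 * Real.pi)
      (by positivity)).const_mul _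
  have key := congrFun (hcont.fourierInv_fourier_eq hInteg hFi) 1
  rw [Real.fourierInv_eq'] at key
  have h1 : f 1 = Complex.exp (-(c:ℂ)) := by
    rw [hfe 1 (by simp)]; simp
  rw [h1] at key
  have h2 := Measure.integral_comp_mul_left (fun v : ℝ =>
    Complex.exp (S c v) * (S c v) ^ (-(a:ℂ))) (2 * Real.pi)
  have h3 : ∫ w : ℝ, Complex.exp (S c (2 * Real.pi * w)) * (S c (2 * Real.pi * w)) ^ (-(a:ℂ))
      = (Complex.exp c / Real.Gamma a) * Complex.exp (-(c:ℂ)) := by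
    rw [← key, ← integral_const_mul]
    congr 1; ext w
    have hGc : (Real.Gamma a : ℂ) ≠ 0 := by exact_mod_cast hG
    rw [hF, smul_eq_mul]
    have : Complex.exp (S c (2 * Real.pi * w)) = Complex.exp c *
      Complex.exp (↑(2 * Real.pi * inner ℝ w 1) * Complex.I) := by
      rw [← Complex.exp_add]; congr 1; simp [S]
    rw [this]
    field_simp
  rw [h3] at h2
  have h4 : Complex.exp c * Complex.exp (-(c:ℂ)) = 1 := by rw [← Complex.exp_add]; simp
  rw [abs_of_pos (by positivity), div_mul_eq_mul_div, h4] at h2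
  have hpi : (Real.pi : ℂ) ≠ 0 := by exact_mod_cast Real.pi_ne_zero
  rw [Complex.real_smul] at h2
  push_cast at h2
  field_simp at h2
  rw [← h2]

/-- `cos (π β / 2)` -/
noncomputable def kap (β : ℝ) : ℝ := Real.cos (Real.pi / 2 * β)

lemma kap_pos {β : ℝ} (h0 : 0 < β) (h1 : β < 1) : 0 < kap β := by
  apply Real.cos_pos_of_mem_Ioo
  have := Real.pi_pos
  constructor <;> nlinarith

lemma re_cpow_ge {β : ℝ} (h0 : 0 < β) (h1 : β < 1) {s : ℂ} (hs : 0 ≤ s.re) :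
    kap β * ‖s‖ ^ β ≤ (s ^ (β:ℂ)).re := by
  rw [Complex.cpow_ofReal_re, mul_comm]
  have harg := Complex.abs_arg_le_pi_div_two_iff.2 hs
  gcongr
  rw [kap, ← Real.cos_abs (s.arg * β), abs_mul, abs_of_pos h0]
  have := Real.pi_pos
  apply Real.cos_le_cos_of_nonneg_of_le_pi
  · positivity
  · nlinarith
  · gcongr

/-- the integrand -/
noncomputable def G (β y : ℝ) (s : ℂ) : ℂ := Complex.exp (s - y * s ^ (β:ℂ))

lemma G_norm {β y : ℝ} (h0 : 0 < β) (h1 : β < 1) (hy : 0 ≤ y) {s : ℂ} (hs : 0 ≤ s.re) :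
    ‖G β y s‖ ≤ Real.exp s.re * Real.exp (-(y * kap β * ‖s‖ ^ β)) := by
  rw [G, Complex.norm_exp, ← Real.exp_add]
  apply Real.exp_le_exp.2
  have := mul_le_mul_of_nonneg_left (re_cpow_ge h0 h1 hs) hy
  simp
  linarith

lemma exp_int {β b : ℝ} (h0 : 0 < β) (hb : 0 < b) :
    Integrable (fun v : ℝ => Real.exp (-(b * |v| ^ β))) := by
  have h := integrableOn_rpow_mul_exp_neg_mul_rpow (p := β) (s := 0) (b := b) (by norm_num) h0 hb
  have := (integrable_fun_norm_addHaar (E := ℝ) volume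
    (f := fun x => Real.exp (-(b * x ^ β)))).2 (by simpa using h)
  simpa using this

lemma G_cont {β y : ℝ} (h0 : 0 < β) {c : ℝ} (hc : 0 ≤ c) :
    Continuous (fun v => G β y (S c v)) := by
  unfold G
  refine Complex.continuous_exp.comp ((S_cont c).sub (continuous_const.mul ?_))
  refine continuous_iff_continuousAt.2 fun v => ?_
  exact (Complex.continuousAt_cpow_const_of_re_pos (z := S c v) (Or.inl (by simpa))
    (by simpa)).comp (S_cont c).continuousAt

lemma G_norm_S {β y : ℝ} (h0 : 0 < β) (h1 : β < 1) (hy : 0 ≤ y) {c : ℝ} (hc : 0 ≤ c) (v : ℝ) :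
    ‖G β y (S c v)‖ ≤ Real.exp c * Real.exp (-(y * kap β * |v| ^ β)) := by
  refine (G_norm h0 h1 hy (by simpa)).trans ?_
  have := S_norm_ge' c v
  have := kap_pos h0 h1
  rw [S_re]
  gcongr

lemma G_int {β y : ℝ} (h0 : 0 < β) (h1 : β < 1) (hy : 0 < y) {c : ℝ} (hc : 0 ≤ c) :
    Integrable (fun v => G β y (S c v)) := by
  have := kap_pos h0 h1
  exact Integrable.mono' ((exp_int h0 (b := y * kap β) (by positivity)).const_mul (Real.exp c))
    (G_cont h0 hc).aestronglyMeasurable (ae_of_all _ (G_norm_S h0 h1 hy.le hc))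

lemma exp_lim {β b : ℝ} (h0 : 0 < β) (hb : 0 < b) :
    Tendsto (fun v : ℝ => Real.exp (-(b * v ^ β))) atTop (𝓝 0) :=
  Real.tendsto_exp_neg_atTop_nhds_zero.comp ((tendsto_rpow_atTop h0).const_mul_atTop hb)

lemma shift {β y : ℝ} (h0 : 0 < β) (h1 : β < 1) (hy : 0 < y) {c : ℝ} (hc : 0 < c) :
    ∫ v, G β y (S 0 v) = ∫ v, G β y (S c v) := by
  have hk := kap_pos h0 h1
  have hrect : ∀ T : ℝ, 0 < T →
      ((∫ x in (0:ℝ)..c, G β y (S x (-T))) - ∫ x in (0:ℝ)..c, G β y (S x T)) +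
      Complex.I • (∫ v in (-T)..T, G β y (S c v)) - Complex.I • (∫ v in (-T)..T, G β y (S 0 v))
      = 0 := by
    intro T hT
    refine Complex.integral_boundary_rect_eq_zero_of_continuousOn_of_differentiableOn
      (G β y) ⟨0, -T⟩ ⟨c, T⟩ ?_ ?_
    · intro z hz
      have hz' : 0 ≤ z.re := by
        have := hz.1
        simp only [mem_preimage, uIcc_of_le hc.le] at this
        exact this.1
      refine ContinuousAt.continuousWithinAt ?_
      unfold G
      exact Complex.continuous_exp.continuousAt.comp (continuousAt_id.sub (continuousAt_const.mul
        (Complex.continuousAt_cpow_const_of_re_pos (Or.inl hz') (by simpa))))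
    · intro z hz
      have hz' : 0 < z.re := by
        have := hz.1
        simp only [mem_preimage, min_eq_left hc.le] at this
        exact this.1
      refine DifferentiableAt.differentiableWithinAt ?_
      unfold G
      exact (differentiableAt_id.sub
        ((differentiableAt_id.cpow_const (Or.inl hz')).const_mul _)).cexp
  have hside : ∀ e : ℝ, |e| = 1 → Tendsto (fun T : ℝ => ∫ x in (0:ℝ)..c, G β y (S x (e * T)))
      atTop (𝓝 0) := by
    intro e he
    have hlim : Tendsto (fun T : ℝ => Real.exp c * Real.exp (-(y * kap β * T ^ β)) * |c - 0|)
        atTop (𝓝 0) := by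
      simpa using ((exp_lim h0 (b := y * kap β) (by positivity)).const_mul
        (Real.exp c)).mul_const |c - 0|
    refine squeeze_zero_norm' ?_ hlim
    filter_upwards [eventually_gt_atTop 0] with T hT
    refine intervalIntegral.norm_integral_le_of_norm_le_const fun x hx => ?_
    rw [uIoc_of_le hc.le] at hx
    refine (G_norm_S h0 h1 hy.le hx.1.le _).trans ?_
    rw [abs_mul, he, one_mul, abs_of_pos hT]
    have := hx.2
    gcongr
  have l1 := hside (-1) (by simp)
  have l2 := hside 1 (by simp)
  have l3 := intervalIntegral_tendsto_integral (G_int h0 h1 hy hc.le) tendsto_neg_atTop_atBot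
    tendsto_id
  have l4 := intervalIntegral_tendsto_integral (G_int h0 h1 hy (le_refl 0))
    tendsto_neg_atTop_atBot tendsto_id
  have L := ((l1.sub l2).add (l3.const_smul Complex.I)).sub (l4.const_smul Complex.I)
  have L0 : Tendsto (fun _ : ℝ => (0:ℂ)) atTop (𝓝 0) := tendsto_const_nhds
  have := tendsto_nhds_unique (L.congr' (by
    filter_upwards [eventually_gt_atTop 0] with T hT
    have := hrect T hT
    simpa using this)) L0
  have h5 : Complex.I * ((∫ v, G β y (S c v)) - ∫ v, G β y (S 0 v)) = 0 := by
    rw [mul_sub]; simpa using this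
  have h6 := (mul_eq_zero.1 h5).resolve_left Complex.I_ne_zero
  exact (sub_eq_zero.1 h6).symm

lemma G_conj {β y : ℝ} (v : ℝ) :
    G β y (S 0 (-v)) = (starRingEnd ℂ) (G β y (S 0 v)) := by
  have h : S 0 (-v) = (starRingEnd ℂ) (S 0 v) := by simp [S]
  have harg : (S 0 v).arg ≠ Real.pi := by
    intro h
    rw [Complex.arg_eq_pi_iff] at h
    simp at h
  rw [G, G, h, Complex.conj_cpow _ _ harg, ← Complex.exp_conj]
  simp

lemma density_eq {β y : ℝ} (h0 : 0 < β) (h1 : β < 1) (hy : 0 < y) :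
    ((y ^ (-1 - 1 / β) * stableDensity β (y ^ (-1 / β)) : ℝ) : ℂ)
      = 1 / (2 * Real.pi) * (1 / y) * ∫ v, G β y (S 0 v) := by
  have hb : 0 < y ^ (1 / β) := by positivity
  have hi := G_int h0 h1 hy (le_refl 0)
  set J : ℂ := ∫ v in Ioi (0:ℝ), G β y (S 0 (-v)) with hJ
  have hfull : ∫ v, G β y (S 0 v) = ((2 * J.re : ℝ) : ℂ) := by
    rw [← intervalIntegral.integral_Iic_add_Ioi (b := 0) hi.integrableOn hi.integrableOn]
    have e1 : ∫ v in Iic (0:ℝ), G β y (S 0 v) = J := by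
      have := integral_comp_neg_Ioi 0 (fun v => G β y (S 0 v))
      rw [neg_zero] at this
      exact this.symm
    have e2 : ∫ v in Ioi (0:ℝ), G β y (S 0 v) = (starRingEnd ℂ) J := by
      rw [hJ, ← integral_conj]
      congr 1; ext v
      rw [G_conj]; simp
    rw [e1, e2, Complex.add_conj]
  have hscale : (∫ u in Set.Ioi (0:ℝ),
      Complex.exp (-(Complex.I * u * (y ^ (-1 / β) : ℝ)) -
        (u : ℂ) ^ (β : ℂ) * Complex.exp (-(Complex.I * Real.pi * β) / 2)))
      = (y ^ (1 / β) : ℝ) * J := by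
    have := integral_comp_mul_left_Ioi (fun u : ℝ =>
      Complex.exp (-(Complex.I * u * (y ^ (-1 / β) : ℝ)) -
        (u : ℂ) ^ (β : ℂ) * Complex.exp (-(Complex.I * Real.pi * β) / 2))) 0 hb
    rw [mul_zero, Complex.real_smul] at this
    have hbc : ((y ^ (1 / β) : ℝ) : ℂ) ≠ 0 := by exact_mod_cast hb.ne'
    have e : J = ∫ x in Ioi (0:ℝ), Complex.exp
        (-(Complex.I * (y ^ (1 / β) * x : ℝ) * (y ^ (-1 / β) : ℝ)) -
        ((y ^ (1 / β) * x : ℝ) : ℂ) ^ (β : ℂ) *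
          Complex.exp (-(Complex.I * Real.pi * β) / 2)) := by
      refine setIntegral_congr_fun measurableSet_Ioi fun v hv => ?_
      have hv' : 0 < v := hv
      simp only [G]
      have hS : S 0 (-v) = (v:ℂ) * (-Complex.I) := by simp [S]
      congr 2
      · rw [hS]
        have : y ^ (1 / β) * y ^ (-1 / β) = 1 := by
          rw [← Real.rpow_add hy]; ring_nf; simp
        have h' : ((y ^ (1 / β) : ℝ) : ℂ) * ((y ^ (-1 / β) : ℝ) : ℂ) = 1 := by exact_mod_cast this
        push_cast at h' ⊢
        linear_combination (Complex.I * v) * h'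
      · rw [hS]
        have e3 : ((v:ℂ) * (-Complex.I)) ^ (β:ℂ)
            = (v:ℂ) ^ (β:ℂ) * Complex.exp (-(Complex.I * Real.pi * β) / 2) := by
          have hvc : (v:ℂ) ≠ 0 := by exact_mod_cast hv'.ne'
          have hI : -Complex.I ≠ 0 := neg_ne_zero.2 Complex.I_ne_zero
          rw [Complex.cpow_def_of_ne_zero (mul_ne_zero hvc hI), Complex.cpow_def_of_ne_zero hvc,
            Complex.log_ofReal_mul hv' hI, Complex.log_neg_I, ← Complex.exp_add,
            Complex.ofReal_log hv'.le]
          congr 1; ring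
        rw [e3, Complex.ofReal_mul, Complex.mul_cpow_ofReal_nonneg hb.le hv'.le,
          ← Complex.ofReal_cpow hb.le, ← Real.rpow_mul hy.le, one_div_mul_cancel h0.ne',
          Real.rpow_one]
        ring
    rw [e, this, ← mul_assoc]
    push_cast at hbc ⊢
    rw [mul_inv_cancel₀ hbc, one_mul]
  rw [hfull, stableDensity, hscale, Complex.re_ofReal_mul]
  have e4 : y ^ (-1 - 1 / β) * y ^ (1 / β) = 1 / y := by
    rw [← Real.rpow_add hy]; ring_nf; rw [Real.rpow_neg_one]
  have : y ^ (-1 - 1 / β) * (1 / Real.pi * (y ^ (1 / β) * J.re))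
    = 1 / (2 * Real.pi) * (1 / y) * (2 * J.re) := by
    rw [← e4]; field_simp
  rw [this]; push_cast; ring

/-- the integrand after integration by parts -/
noncomputable def Q (β y : ℝ) (s : ℂ) : ℂ :=
  ((1 - β) * s ^ ((β - 2 : ℝ) : ℂ) + y * β * (s ^ ((β - 1 : ℝ) : ℂ)) ^ 2) * G β y s

lemma Q_norm {β y : ℝ} (h0 : 0 < β) (h1 : β < 1) (hy : 0 < y) {c : ℝ} (hc : 0 < c) (v : ℝ) :
    ‖Q β y (S c v)‖ ≤ Real.exp c * (1 + 2 / kap β) *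
      (‖S c v‖ ^ (β - 2) * Real.exp (-(kap β / 2 * ‖S c v‖ ^ β) * y)) := by
  have hk := kap_pos h0 h1
  have hN : 0 < ‖S c v‖ := norm_pos_iff.2 (S_ne hc v)
  have hG := G_norm h0 h1 hy.le (s := S c v) (by simpa using hc.le)
  rw [S_re] at hG
  set N := ‖S c v‖ with hNdef
  have hx : y * kap β * N ^ β / 2 ≤ Real.exp (y * kap β * N ^ β / 2) := by
    linarith [Real.add_one_le_exp (y * kap β * N ^ β / 2)]
  set E := Real.exp (y * kap β * N ^ β / 2) with hE
  have hE1 : 1 ≤ E := Real.one_le_exp (by positivity)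
  have e1 : Real.exp (-(kap β / 2 * N ^ β) * y) = E⁻¹ := by
    rw [hE, ← Real.exp_neg]; congr 1; ring
  have e2 : Real.exp (-(y * kap β * N ^ β)) = E⁻¹ * E⁻¹ := by
    rw [hE, ← Real.exp_neg, ← Real.exp_add]; congr 1; ring
  have e3 : (N ^ (β - 1)) ^ 2 = N ^ (β - 2) * N ^ β := by
    rw [← Real.rpow_natCast, ← Real.rpow_mul hN.le, ← Real.rpow_add hN]; congr 1; push_cast; ring
  have hA : ‖(1 - β) * (S c v) ^ ((β - 2 : ℝ) : ℂ) +
      y * β * ((S c v) ^ ((β - 1 : ℝ) : ℂ)) ^ 2‖ ≤ N ^ (β - 2) * (1 + y * N ^ β) := by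
    refine (norm_add_le _ _).trans ?_
    rw [norm_mul, norm_mul, norm_mul, norm_pow, Complex.norm_cpow_real, Complex.norm_cpow_real,
      ← hNdef, e3, ← Complex.ofReal_one, ← Complex.ofReal_sub, Complex.norm_real,
      Complex.norm_real, Complex.norm_real, Real.norm_of_nonneg (by linarith : 0 ≤ 1 - β),
      Real.norm_of_nonneg hy.le, Real.norm_of_nonneg h0.le]
    have t1 : 0 ≤ N ^ (β - 2) := by positivity
    have t2 : 0 ≤ y * (N ^ (β - 2) * N ^ β) := by positivity
    nlinarith
  rw [Q, norm_mul, e1]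
  rw [e2] at hG
  have hEp : 0 < E := by linarith
  calc _ ≤ (N ^ (β - 2) * (1 + y * N ^ β)) * (Real.exp c * (E⁻¹ * E⁻¹)) := by gcongr
    _ ≤ (N ^ (β - 2) * (E + 2 / kap β * E)) * (Real.exp c * (E⁻¹ * E⁻¹)) := by
      have : y * N ^ β ≤ 2 / kap β * E := by
        calc y * N ^ β = 2 / kap β * (y * kap β * N ^ β / 2) := by field_simp
          _ ≤ _ := by gcongr
      gcongr
    _ = _ := by field_simp

lemma Q_cont {β y : ℝ} (h0 : 0 < β) {c : ℝ} (hc : 0 < c) :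
    Continuous (fun v => Q β y (S c v)) := by
  unfold Q
  exact ((continuous_const.mul (S_cpow_cont hc _)).add (continuous_const.mul
    ((S_cpow_cont hc _).pow 2))).mul (G_cont h0 hc.le)

lemma Q_int {β y : ℝ} (h0 : 0 < β) (h1 : β < 1) (hy : 0 < y) {c : ℝ} (hc : 0 < c) :
    Integrable (fun v => Q β y (S c v)) := by
  have hk := kap_pos h0 h1
  refine Integrable.mono' (((exp_int h0 (b := kap β / 2 * y) (by positivity)).const_mul
    (c ^ (β - 2))).const_mul (Real.exp c * (1 + 2 / kap β)))
    (Q_cont h0 hc).aestronglyMeasurable (ae_of_all _ fun v => (Q_norm h0 h1 hy hc v).trans ?_)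
  have hN := S_norm_ge hc.le v
  have hv := S_norm_ge' c v
  gcongr ?_ * (?_ * ?_)
  · exact Real.rpow_le_rpow_of_nonpos hc hN (by linarith)
  · apply Real.exp_le_exp.2
    have : |v| ^ β ≤ ‖S c v‖ ^ β := by gcongr
    have := mul_le_mul_of_nonneg_left this (by positivity : 0 ≤ kap β / 2 * y)
    linarith

lemma S_deriv (c v : ℝ) : HasDerivAt (S c) Complex.I v := by
  unfold S
  simpa using ((Complex.ofRealCLM.hasDerivAt (x := v)).mul_const Complex.I).const_add (c:ℂ)

lemma ibp {β y : ℝ} (h0 : 0 < β) (h1 : β < 1) (hy : 0 < y) {c : ℝ} (hc : 0 < c) :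
    (1 / y : ℂ) * ∫ v, G β y (S c v) = β * ∫ v, Q β y (S c v) := by
  have hk := kap_pos h0 h1
  have hyc : (y:ℂ) ≠ 0 := by exact_mod_cast hy.ne'
  have hder : ∀ v, HasDerivAt
      (fun v => (1 / y + β * (S c v) ^ ((β - 1 : ℝ) : ℂ)) * G β y (S c v))
      (Complex.I * ((1 / y : ℂ) * G β y (S c v) - β * Q β y (S c v))) v := by
    intro v
    have hs := S_slit hc v
    have d1 : HasDerivAt (fun s : ℂ => s ^ (β:ℂ)) (β * (S c v) ^ ((β - 1 : ℝ) : ℂ)) (S c v) := by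
      refine ((hasDerivAt_id (S c v)).cpow_const (c := (β:ℂ)) hs).congr_deriv ?_
      push_cast; simp
    have d2 : HasDerivAt (fun s : ℂ => s ^ ((β - 1 : ℝ) : ℂ))
        ((β - 1) * (S c v) ^ ((β - 2 : ℝ) : ℂ)) (S c v) := by
      refine ((hasDerivAt_id (S c v)).cpow_const (c := ((β - 1 : ℝ) : ℂ)) hs).congr_deriv ?_
      push_cast
      rw [show (β:ℂ) - 1 - 1 = β - 2 by ring]; simp
    have d3 : HasDerivAt (G β y) (G β y (S c v) * (1 - y * (β * (S c v) ^ ((β - 1 : ℝ) : ℂ))))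
        (S c v) := ((hasDerivAt_id (S c v)).sub (d1.const_mul (y:ℂ))).cexp
    have d4 := ((d2.const_mul (β:ℂ)).const_add (1 / y : ℂ)).mul d3
    have d5 := d4.comp v (S_deriv c v)
    refine d5.congr_deriv ?_
    simp only [Q]
    field_simp
    ring
  have hInteg : Integrable (fun v => Complex.I * ((1 / y : ℂ) * G β y (S c v)
      - β * Q β y (S c v))) :=
    (((G_int h0 h1 hy hc.le).const_mul _).sub ((Q_int h0 h1 hy hc).const_mul _)).const_mul _
  have hbound : ∀ v, ‖(1 / y + β * (S c v) ^ ((β - 1 : ℝ) : ℂ)) * G β y (S c v)‖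
      ≤ (1 / y + β * c ^ (β - 1)) * Real.exp c * Real.exp (-(y * kap β * |v| ^ β)) := by
    intro v
    rw [norm_mul, mul_assoc]
    refine mul_le_mul ((norm_add_le _ _).trans ?_) (G_norm_S h0 h1 hy.le hc.le v)
      (norm_nonneg _) (by positivity)
    rw [norm_mul, Complex.norm_cpow_real, norm_div, Complex.norm_real, Complex.norm_real,
      Real.norm_of_nonneg hy.le, Real.norm_of_nonneg h0.le, norm_one]
    gcongr _ + _ * ?_
    exact Real.rpow_le_rpow_of_nonpos hc (S_norm_ge hc.le v) (by linarith)
  have hl := (exp_lim h0 (b := y * kap β) (by positivity)).const_mul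
    ((1 / y + β * c ^ (β - 1)) * Real.exp c)
  rw [mul_zero] at hl
  have := integral_of_hasDerivAt_of_tendsto hder hInteg
    (squeeze_zero_norm hbound (hl.comp tendsto_abs_atBot_atTop))
    (squeeze_zero_norm hbound (hl.comp tendsto_abs_atTop_atTop))
  rw [integral_const_mul, integral_sub ((G_int h0 h1 hy hc.le).const_mul _)
    ((Q_int h0 h1 hy hc).const_mul _), integral_const_mul, integral_const_mul, sub_self] at this
  exact sub_eq_zero.1 ((mul_eq_zero.1 this).resolve_left Complex.I_ne_zero)

lemma K_int {β a : ℝ} (ha : 0 < a) {c : ℝ} (hc : 0 < c) :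
    Integrable (fun p : ℝ × ℝ => ‖S c p.2‖ ^ (β - 2) * Real.exp (-(a * ‖S c p.2‖ ^ β) * p.1))
      ((volume.restrict (Ioi 0)).prod volume) := by
  have hN : ∀ v, 0 < ‖S c v‖ := fun v => norm_pos_iff.2 (S_ne hc v)
  have hcont : ∀ q : ℝ, Continuous (fun p : ℝ × ℝ => ‖S c p.2‖ ^ q) := fun q =>
    ((S_cont c).comp continuous_snd).norm.rpow_const (fun p => Or.inl (hN p.2).ne')
  refine (integrable_prod_iff' ?_).2 ⟨ae_of_all _ fun v => ?_, ?_⟩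
  · refine Continuous.aestronglyMeasurable ?_
    exact (hcont _).mul (Real.continuous_exp.comp
      ((continuous_const.mul (hcont β)).neg.mul continuous_fst))
  · have := hN v
    have hI : Integrable (fun y : ℝ => Real.exp (-(a * ‖S c v‖ ^ β) * y))
        (volume.restrict (Ioi 0)) :=
      integrableOn_exp_mul_Ioi (by simp only [Left.neg_neg_iff]; positivity) 0
    exact hI.const_mul (‖S c v‖ ^ (β - 2))
  · refine ((norm_sq_integrable hc).const_mul a⁻¹).congr (ae_of_all _ fun v => ?_)
    have hNv := hN v
    simp only
    have : ∀ y : ℝ, ‖‖S c v‖ ^ (β - 2) * Real.exp (-(a * ‖S c v‖ ^ β) * y)‖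
      = ‖S c v‖ ^ (β - 2) * Real.exp (-(a * ‖S c v‖ ^ β) * y) := fun y =>
      Real.norm_of_nonneg (by positivity)
    simp_rw [this]
    rw [integral_const_mul, integral_exp_mul_Ioi (by simp only [Left.neg_neg_iff]; positivity),
      mul_zero, Real.exp_zero, show (-2:ℝ) = (β - 2) - β by ring, Real.rpow_sub hNv (β - 2) β]
    field_simp

lemma fub_int {β u : ℝ} (h0 : 0 < β) (h1 : β < 1) (hu : 0 < u) {c : ℝ} (hc : 0 < c) :
    Integrable (Function.uncurry fun y v : ℝ => Complex.exp (-u * y) * Q β y (S c v))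
      ((volume.restrict (Ioi 0)).prod volume) := by
  have hk := kap_pos h0 h1
  refine Integrable.mono' ((K_int (β := β) (a := kap β / 2) (by positivity) hc).const_mul
    (Real.exp c * (1 + 2 / kap β))) ?_ ?_
  · refine Continuous.aestronglyMeasurable ?_
    have hcp : ∀ q : ℂ, Continuous (fun p : ℝ × ℝ => (S c p.2) ^ q) := fun q =>
      (S_cpow_cont hc q).comp continuous_snd
    have hy : Continuous (fun p : ℝ × ℝ => (p.1 : ℂ)) := by fun_prop
    have hS : Continuous (fun p : ℝ × ℝ => S c p.2) := (S_cont c).comp continuous_snd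
    simp only [Function.uncurry_def, Q, G]
    refine Continuous.mul (by fun_prop) (Continuous.mul ?_ ?_)
    · exact (continuous_const.mul (hcp _)).add ((hy.mul continuous_const).mul ((hcp _).pow 2))
    · exact (hS.sub (hy.mul (hcp _))).cexp
  · have : ∀ᵐ p : ℝ × ℝ ∂((volume.restrict (Ioi 0)).prod volume), p.1 ∈ Ioi (0:ℝ) :=
      Measure.quasiMeasurePreserving_fst.ae (ae_restrict_mem measurableSet_Ioi)
    filter_upwards [this] with p hp
    have hp' : 0 < p.1 := hp
    simp only [Function.uncurry_def, norm_mul]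
    refine le_trans ?_ (Q_norm h0 h1 hp hc p.2)
    refine mul_le_of_le_one_left (norm_nonneg _) ?_
    rw [Complex.norm_exp]
    apply Real.exp_le_one_iff.2
    simp
    positivity

lemma inner_eq {β u : ℝ} (h0 : 0 < β) (h1 : β < 1) (hu : 0 < u) {c : ℝ} (hc : 0 < c) (v : ℝ) :
    ∫ y in Ioi (0:ℝ), Complex.exp (-u * y) * Q β y (S c v)
     = Complex.exp (S c v) * ((1 - β) * (S c v) ^ ((β - 2 : ℝ) : ℂ) / ((S c v) ^ (β:ℂ) + u) +
        β * ((S c v) ^ ((β - 1 : ℝ) : ℂ)) ^ 2 / ((S c v) ^ (β:ℂ) + u) ^ 2) := by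
  set W := (S c v) ^ (β:ℂ) + u with hW
  have hWre : 0 < W.re := by
    have := re_cpow_ge h0 h1 (s := S c v) (by simpa using hc.le)
    have hk := kap_pos h0 h1
    have : 0 ≤ kap β * ‖S c v‖ ^ β := by positivity
    simp [hW]; linarith
  have i1 := laplace_integrableC (a := 1) one_pos hWre
  have i2 := laplace_integrableC (a := 2) two_pos hWre
  have l1 := laplace_eq (a := 1) one_pos hWre
  have l2 := laplace_eq (a := 2) two_pos hWre
  have e : ∀ y ∈ Ioi (0:ℝ), Complex.exp (-u * y) * Q β y (S c v) =
      (Complex.exp (S c v) * ((1 - β) * (S c v) ^ ((β - 2 : ℝ) : ℂ))) *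
        (((y ^ ((1:ℝ) - 1) : ℝ) : ℂ) * Complex.exp (-W * y)) +
      (Complex.exp (S c v) * (β * ((S c v) ^ ((β - 1 : ℝ) : ℂ)) ^ 2)) *
        (((y ^ ((2:ℝ) - 1) : ℝ) : ℂ) * Complex.exp (-W * y)) := by
    intro y _
    have : Complex.exp (-u * y) * G β y (S c v)
      = Complex.exp (S c v) * Complex.exp (-W * y) := by
      rw [G, ← Complex.exp_add, ← Complex.exp_add]; congr 1; rw [hW]; ring
    rw [Q, mul_left_comm, this, show (2:ℝ) - 1 = 1 by norm_num, sub_self, Real.rpow_zero,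
      Real.rpow_one]
    push_cast; ring
  rw [setIntegral_congr_fun measurableSet_Ioi e, integral_add (i1.const_mul _) (i2.const_mul _),
    integral_const_mul, integral_const_mul, l1, l2]
  simp [Complex.cpow_neg]
  ring

lemma series_eq {β u : ℝ} (h0 : 0 < β) {c : ℝ} (hc : 0 < c)
    (hcu : u < c ^ β) (hu : 0 < u) (v : ℝ) :
    HasSum (fun j : ℕ => (((-u) ^ j * (β * j + 1) : ℝ) : ℂ) *
        (Complex.exp (S c v) * (S c v) ^ (-((j * β + 2 : ℝ) : ℂ))))
      (Complex.exp (S c v) * ((1 - β) * (S c v) ^ ((β - 2 : ℝ) : ℂ) / ((S c v) ^ (β:ℂ) + u) +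
        β * ((S c v) ^ ((β - 1 : ℝ) : ℂ)) ^ 2 / ((S c v) ^ (β:ℂ) + u) ^ 2)) := by
  have hs := S_ne hc v
  set s := S c v with hsdef
  have hp : s ^ (β:ℂ) ≠ 0 := by simp [Complex.cpow_eq_zero_iff, hs]
  have e1 : s ^ ((β - 2 : ℝ) : ℂ) = s ^ (β:ℂ) / s ^ 2 := by
    push_cast; rw [Complex.cpow_sub _ _ hs]; norm_cast
  have e2 : s ^ ((β - 1 : ℝ) : ℂ) = s ^ (β:ℂ) / s := by
    push_cast; rw [Complex.cpow_sub _ _ hs, Complex.cpow_one]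
  have e3 : ∀ j : ℕ, s ^ (-((j * β + 2 : ℝ) : ℂ)) = ((s ^ (β:ℂ)) ^ j)⁻¹ / s ^ 2 := by
    intro j
    push_cast
    rw [Complex.cpow_neg, Complex.cpow_add _ _ hs, Complex.cpow_nat_mul, mul_inv]
    norm_cast
  have hnp : ‖s ^ (β:ℂ)‖ = ‖s‖ ^ β := Complex.norm_cpow_real _ _
  have hNle : c ^ β ≤ ‖s‖ ^ β := Real.rpow_le_rpow hc.le (S_norm_ge hc.le v) h0.le
  rw [e1, e2]
  simp_rw [e3]
  generalize s ^ (β:ℂ) = p at *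
  have hpu : u < ‖p‖ := by rw [hnp]; linarith
  have hq : ‖-(u:ℂ) / p‖ < 1 := by
    rw [norm_div, norm_neg, Complex.norm_real, Real.norm_of_nonneg hu.le,
      div_lt_one (by linarith)]
    exact hpu
  have hpuz : p + u ≠ 0 := by
    intro h
    have : p = -(u:ℂ) := eq_neg_of_add_eq_zero_left h
    rw [this, norm_neg, Complex.norm_real, Real.norm_of_nonneg hu.le] at hpu
    exact lt_irrefl _ hpu
  have H := (((hasSum_coe_mul_geometric_of_norm_lt_one hq).mul_left (β:ℂ)).add
    (hasSum_geometric_of_norm_lt_one hq)).mul_left (Complex.exp s / s ^ 2)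
  convert! H using 1
  · ext j
    push_cast
    rw [div_pow]
    field_simp
  · have : 1 - -(u:ℂ) / p = (p + u) / p := by field_simp; ring
    rw [this]
    field_simp
    ring

lemma sum_int {β u : ℝ} (h0 : 0 < β) {c : ℝ} (hc : 0 < c)
    (hcu : u < c ^ β) (hu : 0 < u) :
    HasSum (fun j : ℕ => (((-u) ^ j * (β * j + 1) : ℝ) : ℂ) *
        (2 * Real.pi / Real.Gamma (j * β + 2)))
      (∫ v, Complex.exp (S c v) * ((1 - β) * (S c v) ^ ((β - 2 : ℝ) : ℂ) /
        ((S c v) ^ (β:ℂ) + u) +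
        β * ((S c v) ^ ((β - 1 : ℝ) : ℂ)) ^ 2 / ((S c v) ^ (β:ℂ) + u) ^ 2)) := by
  have hcβ : 0 < c ^ β := by positivity
  have hInteg : ∀ j : ℕ, Integrable (fun v => (((-u) ^ j * (β * j + 1) : ℝ) : ℂ) *
        (Complex.exp (S c v) * (S c v) ^ (-((j * β + 2 : ℝ) : ℂ)))) := by
    intro j
    refine Integrable.const_mul ?_ _
    refine Integrable.mono' ((norm_rpow_integrable hc (a := j * β + 2)
      (by have : 0 ≤ (j:ℝ) * β := by positivity
          linarith)).norm.const_mul (Real.exp c)) ?_ (ae_of_all _ fun v => ?_)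
    · exact (((S_cont c).cexp).mul (S_cpow_cont hc _)).aestronglyMeasurable
    · rw [norm_mul, Complex.norm_exp, S_re]
  have hnorm : ∀ (j : ℕ) (v : ℝ), ‖(((-u) ^ j * (β * j + 1) : ℝ) : ℂ) *
        (Complex.exp (S c v) * (S c v) ^ (-((j * β + 2 : ℝ) : ℂ)))‖
      ≤ Real.exp c * ((β * j + 1) * (u / c ^ β) ^ j) * ‖S c v‖ ^ (-2:ℝ) := by
    intro j v
    have hN : 0 < ‖S c v‖ := norm_pos_iff.2 (S_ne hc v)
    rw [norm_mul, norm_mul, Complex.norm_exp, S_re, ← Complex.ofReal_neg, Complex.norm_cpow_real,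
      Complex.norm_real, norm_mul, norm_pow, norm_neg, Real.norm_of_nonneg hu.le,
      Real.norm_of_nonneg (by positivity : 0 ≤ β * j + 1),
      show -(j * β + 2) = -(j * β) + -2 by ring, Real.rpow_add hN]
    have : ‖S c v‖ ^ (-(j * β)) ≤ ((c ^ β) ^ j)⁻¹ := by
      rw [← Real.rpow_natCast, ← Real.rpow_mul hc.le, ← Real.rpow_neg hc.le, mul_comm β]
      exact Real.rpow_le_rpow_of_nonpos hc (S_norm_ge hc.le v)
        (by have : 0 ≤ (j:ℝ) * β := by positivity
            linarith)
    calc _ ≤ u ^ j * (β * j + 1) * (Real.exp c * (((c ^ β) ^ j)⁻¹ * ‖S c v‖ ^ (-2:ℝ))) := by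
          gcongr
      _ = _ := by rw [div_pow]; field_simp
  have hq : ‖u / c ^ β‖ < 1 := by
    rw [Real.norm_of_nonneg (by positivity), div_lt_one hcβ]; exact hcu
  have hsum : Summable fun j : ℕ => ∫ v, ‖(((-u) ^ j * (β * j + 1) : ℝ) : ℂ) *
        (Complex.exp (S c v) * (S c v) ^ (-((j * β + 2 : ℝ) : ℂ)))‖ := by
    have H := (((hasSum_coe_mul_geometric_of_norm_lt_one hq).mul_left β).add
      (hasSum_geometric_of_norm_lt_one hq)).summable
    refine Summable.of_nonneg_of_le (fun j => integral_nonneg fun v => norm_nonneg _)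
      (fun j => integral_mono (hInteg j).norm ((norm_sq_integrable hc).const_mul _) (hnorm j)) ?_
    simp_rw [integral_const_mul]
    refine Summable.mul_right _ (Summable.mul_left _ ?_)
    refine H.congr fun j => ?_
    ring
  have key := hasSum_integral_of_summable_integral_norm hInteg hsum
  simp_rw [fun v => (series_eq h0 hc hcu hu v).tsum_eq] at key
  convert! key using 2 with j
  rw [integral_const_mul, gamma_inv (by have : 0 ≤ (j:ℝ) * β := by positivity
                                        linarith) hc]

end MLS

theorem mittagLeffler_stable_integral_identity (β : ℝ)
    (hβ : β ∈ Set.Ioo (0 : ℝ) 1) (u : ℝ) (hu : 0 < u) :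
    β * mittagLeffler β (-u) =
      ∫ y in Set.Ioi (0:ℝ),
        Real.exp (-u * y) * y ^ (-1 - 1 / β) * stableDensity β (y ^ (-1 / β)) := by
  obtain ⟨h0, h1⟩ := hβ
  obtain ⟨c, hc, hcu⟩ : ∃ c : ℝ, 0 < c ∧ u < c ^ β := by
    refine ⟨(2 * u) ^ (1 / β), by positivity, ?_⟩
    rw [← Real.rpow_mul (by positivity), one_div_mul_cancel h0.ne', Real.rpow_one]
    linarith
  have hpi : (Real.pi : ℂ) ≠ 0 := by exact_mod_cast Real.pi_ne_zero
  apply Complex.ofReal_injective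
  rw [← integral_complex_ofReal]
  have e : ∀ y ∈ Set.Ioi (0:ℝ), ((Real.exp (-u * y) * y ^ (-1 - 1 / β) *
      stableDensity β (y ^ (-1 / β)) : ℝ) : ℂ) = (β / (2 * Real.pi) : ℂ) *
        ∫ v, Complex.exp (-u * y) * MLS.Q β y (MLS.S c v) := by
    intro y hy
    rw [mul_assoc, Complex.ofReal_mul, MLS.density_eq h0 h1 hy, MLS.shift h0 h1 hy hc,
      mul_assoc (1 / (2 * (Real.pi:ℂ))), MLS.ibp h0 h1 hy hc, integral_const_mul]
    push_cast; ring
  rw [setIntegral_congr_fun measurableSet_Ioi e, integral_const_mul,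
    integral_integral_swap (MLS.fub_int h0 h1 hu hc)]
  simp_rw [MLS.inner_eq h0 h1 hu hc]
  rw [← (MLS.sum_int h0 hc hcu hu).tsum_eq, Complex.ofReal_mul, mittagLeffler,
    Complex.ofReal_tsum, div_mul_eq_mul_div, mul_div_assoc, ← tsum_div_const]
  congr 1
  refine tsum_congr fun j => ?_
  have hj : 0 < (j:ℝ) * β + 1 := by positivity
  have hG : Real.Gamma (j * β + 2) = (j * β + 1) * Real.Gamma (j * β + 1) := by
    rw [← Real.Gamma_add_one hj.ne']; congr 1; ring
  have hGp : (Real.Gamma (j * β + 1) : ℂ) ≠ 0 := by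
    exact_mod_cast (Real.Gamma_pos_of_pos hj).ne'
  have hjc : (β:ℂ) * j + 1 ≠ 0 := by rw [mul_comm]; exact_mod_cast hj.ne'
  rw [hG]
  push_cast
  field_simp
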